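/- arXiv:2210.16658 — 6 statements merged into one kernel-verified Lean document; each statement's English description precedes it below -/
import Mathlib

section
/- Let d ≥ K, λ_W > 0, λ_H > 0 and set c := √(λ_H λ_W). If c ≤ 1, then any global minimizer (W*, H*) of g satisfies: (i) within each class all feature columns coincide, i.e. h*_{k,1} = … = h*_{k,n} =: h̄*_k for every k ∈ [K]; (ii) ‖h̄*_1‖₂² = … = ‖h̄*_K‖₂² = ρ, where ρ := (1 − c)√(λ_W/λ_H); (iii) the Gram matrix [h̄*_1, …, h̄*_K]ᵀ[h̄*_1, …, h̄*_K] equals ρ I_K; and (iv) the k-th row of W* equals √(λ_H/λ_W) · (h̄*_k)ᵀ for every k ∈ [K]. -/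
open Matrix Filter
open scoped BigOperators

noncomputable section

variable {K n d : ℕ}

/-- The one-hot label matrix `Y = I_K ⊗ 1_nᵀ`: columns are indexed by class/sample pairs. -/
def Ymat (K n : ℕ) : Matrix (Fin K) (Fin K × Fin n) ℝ :=
  Matrix.of fun k p => if p.1 = k then 1 else 0

/-- Squared Frobenius norm. -/
def frobSq {m p : Type*} [Fintype m] [Fintype p] (M : Matrix m p ℝ) : ℝ :=
  ∑ i, ∑ j, (M i j) ^ 2

/-- Frobenius norm. -/
def frobNorm {m p : Type*} [Fintype m] [Fintype p] (M : Matrix m p ℝ) : ℝ :=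
  Real.sqrt (frobSq M)

/-- The unconstrained-features objective `g`. -/
def g (lW lH : ℝ) (W : Matrix (Fin K) (Fin d) ℝ)
    (H : Matrix (Fin d) (Fin K × Fin n) ℝ) : ℝ :=
  (1 / (2 * (K : ℝ) * n)) * frobSq (W * H - Ymat K n) +
    (lW / (2 * (K : ℝ))) * frobSq W + (lH / (2 * (K : ℝ) * n)) * frobSq H

/-- Class means. -/
def classMean (H : Matrix (Fin d) (Fin K × Fin n) ℝ) (k : Fin K) : Fin d → ℝ :=
  fun a => (1 / (n : ℝ)) * ∑ i, H a (k, i)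

/-- Global mean. -/
def globalMean (H : Matrix (Fin d) (Fin K × Fin n) ℝ) : Fin d → ℝ :=
  fun a => (1 / ((K : ℝ) * n)) * ∑ p, H a p

/-- Matrix of class means `H̄ ∈ ℝ^{d×K}`. -/
def Hbar (H : Matrix (Fin d) (Fin K × Fin n) ℝ) : Matrix (Fin d) (Fin K) ℝ :=
  Matrix.of fun a k => classMean H k a

/-- `H̄ ⊗ 1_nᵀ`: the matrix whose n columns of class k all equal the class mean. -/
def HbarSpread (H : Matrix (Fin d) (Fin K × Fin n) ℝ) :
    Matrix (Fin d) (Fin K × Fin n) ℝ :=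
  Matrix.of fun a p => classMean H p.1 a

/-- Within-class covariance. -/
def SigmaW (H : Matrix (Fin d) (Fin K × Fin n) ℝ) : Matrix (Fin d) (Fin d) ℝ :=
  Matrix.of fun a b =>
    (1 / ((K : ℝ) * n)) * ∑ p : Fin K × Fin n,
      (H a p - classMean H p.1 a) * (H b p - classMean H p.1 b)

/-- Between-class covariance. -/
def SigmaB (H : Matrix (Fin d) (Fin K × Fin n) ℝ) : Matrix (Fin d) (Fin d) ℝ :=
  Matrix.of fun a b =>
    (1 / (K : ℝ)) * ∑ k : Fin K,
      (classMean H k a - globalMean H a) * (classMean H k b - globalMean H b)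

/-- Non-centered total covariance. -/
def SigmaTtil (H : Matrix (Fin d) (Fin K × Fin n) ℝ) : Matrix (Fin d) (Fin d) ℝ :=
  (1 / ((K : ℝ) * n)) • (H * Hᵀ)

/-- Non-centered between-class covariance. -/
def SigmaBtil (H : Matrix (Fin d) (Fin K × Fin n) ℝ) : Matrix (Fin d) (Fin d) ℝ :=
  Matrix.of fun a b => (1 / (K : ℝ)) * ∑ k : Fin K, classMean H k a * classMean H k b

/-- The closed-form optimal last-layer weights `W*(H)`. -/
def Wstar (lW : ℝ) (H : Matrix (Fin d) (Fin K × Fin n) ℝ) :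
    Matrix (Fin K) (Fin d) ℝ :=
  Ymat K n * Hᵀ * (H * Hᵀ + ((n : ℝ) * lW) • (1 : Matrix (Fin d) (Fin d) ℝ))⁻¹

/-- The central-path loss `L(H)`. -/
def Lcp (lW lH : ℝ) (H : Matrix (Fin d) (Fin K × Fin n) ℝ) : ℝ :=
  (1 / (2 * (K : ℝ) * n)) * frobSq (Wstar lW H * H - Ymat K n) +
    (lW / (2 * (K : ℝ))) * frobSq (Wstar lW H) +
    (lH / (2 * (K : ℝ) * n)) * frobSq H

/-- `A(H) = Σ̃_T(H) + (λ_W/K) I`. -/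
def Amat (lW : ℝ) (H : Matrix (Fin d) (Fin K × Fin n) ℝ) : Matrix (Fin d) (Fin d) ℝ :=
  SigmaTtil H + (lW / (K : ℝ)) • 1

/-- The gradient of the central-path loss w.r.t. the Frobenius inner product. -/
def gradL (lW lH : ℝ) (H : Matrix (Fin d) (Fin K × Fin n) ℝ) :
    Matrix (Fin d) (Fin K × Fin n) ℝ :=
  (1 / ((K : ℝ) ^ 2 * n)) •
    ((Amat lW H)⁻¹ * (H - HbarSpread H)
      - (Amat lW H)⁻¹ * (SigmaW H + (lW / (K : ℝ)) • 1) * (Amat lW H)⁻¹ * H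
      + (lH * (K : ℝ)) • H)

/-- NC1 metric. -/
def NC1til (H : Matrix (Fin d) (Fin K × Fin n) ℝ) : ℝ :=
  (SigmaW H).trace / (SigmaB H).trace

/-- One-sample completion of squares. -/
lemma ufm_sample (p q : ℝ) (W : Matrix (Fin K) (Fin d) ℝ) (B : Fin d → Fin K → ℝ) :
    (∑ k, ∑ l, ((∑ a, W k a * B a l) - (if l = k then 1 else 0)) ^ 2)
      + p ^ 2 * (∑ k, ∑ a, W k a ^ 2) + q ^ 2 * (∑ k, ∑ a, B a k ^ 2)
    = (∑ k, ∑ a, (p * W k a - q * B a k) ^ 2)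
      + (∑ k, ∑ l, ((∑ a, W k a * B a l) - (if l = k then (1 - p * q) else 0)) ^ 2)
      + K * (1 - (1 - p * q) ^ 2) := by
  have h1 : ∀ c : ℝ, (∑ k, ∑ l, ((∑ a, W k a * B a l) - (if l = k then c else 0)) ^ 2)
      = (∑ k, ∑ l, (∑ a, W k a * B a l) ^ 2) - 2 * c * (∑ k, ∑ a, W k a * B a k)
        + K * c ^ 2 := by
    intro c
    have : ∀ k l : Fin K, ((∑ a, W k a * B a l) - (if l = k then c else 0)) ^ 2
        = (∑ a, W k a * B a l) ^ 2
          + (if l = k then (c ^ 2 - 2 * c * (∑ a, W k a * B a l)) else 0) := by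
      intro k l
      split_ifs <;> ring
    simp only [this, Finset.sum_add_distrib, Finset.sum_ite_eq', Finset.mem_univ, if_true,
      Finset.sum_sub_distrib, Finset.mul_sum, Finset.sum_const, Finset.card_univ,
      Fintype.card_fin, nsmul_eq_mul]
    ring
  have h2 : (∑ k, ∑ a, (p * W k a - q * B a k) ^ 2)
      = p ^ 2 * (∑ k, ∑ a, W k a ^ 2) + q ^ 2 * (∑ k, ∑ a, B a k ^ 2)
        - 2 * (p * q) * (∑ k, ∑ a, W k a * B a k) := by
    simp only [Finset.mul_sum, ← Finset.sum_add_distrib, ← Finset.sum_sub_distrib]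
    refine Finset.sum_congr rfl fun k _ => Finset.sum_congr rfl fun a _ => ?_
    ring
  rw [h1, h1, h2]
  ring

/-- The nonnegative part of the objective. -/
def ufmRem (p q : ℝ) (W : Matrix (Fin K) (Fin d) ℝ)
    (H : Matrix (Fin d) (Fin K × Fin n) ℝ) : ℝ :=
  ∑ i : Fin n, ((∑ k, ∑ a, (p * W k a - q * H a (k, i)) ^ 2)
      + (∑ k, ∑ l, ((∑ a, W k a * H a (l, i)) - (if l = k then (1 - p * q) else 0)) ^ 2))

lemma ufm_g_eq (p q : ℝ) (hK : 0 < K) (hn : 0 < n) (W : Matrix (Fin K) (Fin d) ℝ)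
    (H : Matrix (Fin d) (Fin K × Fin n) ℝ) :
    g (p ^ 2) (q ^ 2) W H
      = (1 / (2 * (K : ℝ) * n)) * (ufmRem p q W H + n * (K * (1 - (1 - p * q) ^ 2))) := by
  have hK' : (K : ℝ) ≠ 0 := by positivity
  have hn' : (n : ℝ) ≠ 0 := by positivity
  have e1 : frobSq (W * H - Ymat K n) = ∑ i : Fin n, ∑ k, ∑ l,
      ((∑ a, W k a * H a (l, i)) - (if l = k then 1 else 0)) ^ 2 := by
    rw [Finset.sum_comm]
    unfold frobSq
    refine Finset.sum_congr rfl fun k _ => ?_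
    rw [Fintype.sum_prod_type_right]
    rfl
  have e2 : frobSq H = ∑ i : Fin n, ∑ k, ∑ a, H a (k, i) ^ 2 := by
    unfold frobSq
    rw [Finset.sum_comm, Fintype.sum_prod_type_right]
  have e3 : ufmRem p q W H + n * (K * (1 - (1 - p * q) ^ 2))
      = frobSq (W * H - Ymat K n) + n * (p ^ 2 * frobSq W) + q ^ 2 * frobSq H := by
    have c1 : ∀ x : ℝ, (n : ℝ) * x = ∑ _i : Fin n, x := by intro x; simp
    rw [e1, e2, c1, c1, ufmRem, Finset.mul_sum, ← Finset.sum_add_distrib,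
      ← Finset.sum_add_distrib, ← Finset.sum_add_distrib]
    refine Finset.sum_congr rfl fun i _ => ?_
    exact (ufm_sample p q W (fun a l => H a (l, i))).symm
  rw [e3, g]
  field_simp

lemma ufm_exists (p q : ℝ) (hp : 0 < p) (hq : 0 < q) (hc : p * q ≤ 1) (hdK : K ≤ d) :
    ∃ (W : Matrix (Fin K) (Fin d) ℝ) (H : Matrix (Fin d) (Fin K × Fin n) ℝ),
      ufmRem p q W H = 0 := by
  have hr : 0 ≤ (1 - p * q) := by linarith
  set t := Real.sqrt (1 - p * q) with ht
  have ht2 : t * t = 1 - p * q := Real.mul_self_sqrt hr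
  set u := Real.sqrt (q / p)
  have hu : u * u = q / p := Real.mul_self_sqrt (by positivity)
  have hu0 : 0 < u := Real.sqrt_pos.2 (by positivity)
  refine ⟨Matrix.of fun k a => if a = Fin.castLE hdK k then t * u else 0,
    Matrix.of fun a l => if a = Fin.castLE hdK l.1 then t / u else 0, ?_⟩
  unfold ufmRem
  refine Finset.sum_eq_zero fun i _ => ?_
  have z1 : p * (t * u) - q * (t / u) = 0 := by
    have : p * (u * u) = q := by rw [hu]; field_simp
    field_simp
    linear_combination t * this
  have z2 : t * u * (t / u) = 1 - p * q := by
    rw [← ht2]; field_simp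
  rw [Finset.sum_eq_zero, Finset.sum_eq_zero, add_zero]
  · intro k _
    refine Finset.sum_eq_zero fun l _ => ?_
    simp only [Matrix.of_apply, ite_mul, zero_mul, Finset.sum_ite_eq', Finset.mem_univ, if_true,
      (Fin.castLE_injective hdK).eq_iff]
    by_cases h : k = l
    · subst h; simp [z2]
    · simp [h, Ne.symm h]
  · intro k _
    refine Finset.sum_eq_zero fun a _ => ?_
    simp only [Matrix.of_apply]
    split_ifs
    · rw [z1]; simp
    · simp

/-- Theorem 3.1 of Tirer-Bruna, collapse of global minimizers of the UFM:
if `c = √(λ_H λ_W) ≤ 1`, any global minimizer `(W*, H*)` of `g` has collapsed features: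
within-class features coincide with the class means, the class means have common squared
norm `ρ = (1-c)√(λ_W/λ_H)`, their Gram matrix is `ρ I_K`, and `W*`'s rows are
`√(λ_H/λ_W)` times the class means. -/
theorem neural_collapse_of_ufm_minimizer
    (K n d : ℕ) (hK : 0 < K) (hn : 0 < n) (hdK : K ≤ d)
    (lW lH : ℝ) (hlW : 0 < lW) (hlH : 0 < lH)
    (hc : Real.sqrt (lH * lW) ≤ 1)
    (Ws : Matrix (Fin K) (Fin d) ℝ) (Hs : Matrix (Fin d) (Fin K × Fin n) ℝ)
    (hmin : ∀ (W : Matrix (Fin K) (Fin d) ℝ) (H : Matrix (Fin d) (Fin K × Fin n) ℝ),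
      g lW lH Ws Hs ≤ g lW lH W H) :
    (∀ (k : Fin K) (i : Fin n) (a : Fin d), Hs a (k, i) = classMean Hs k a) ∧
    (∀ k : Fin K, ∑ a, (classMean Hs k a) ^ 2
        = (1 - Real.sqrt (lH * lW)) * Real.sqrt (lW / lH)) ∧
    (∀ k k' : Fin K, ∑ a, classMean Hs k a * classMean Hs k' a
        = if k = k' then (1 - Real.sqrt (lH * lW)) * Real.sqrt (lW / lH) else 0) ∧
    (∀ (k : Fin K) (a : Fin d), Ws k a = Real.sqrt (lH / lW) * classMean Hs k a) := by
  obtain ⟨p, hp, rfl⟩ : ∃ p : ℝ, 0 < p ∧ lW = p ^ 2 :=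
    ⟨Real.sqrt lW, Real.sqrt_pos.2 hlW, (Real.sq_sqrt hlW.le).symm⟩
  obtain ⟨q, hq, rfl⟩ : ∃ q : ℝ, 0 < q ∧ lH = q ^ 2 :=
    ⟨Real.sqrt lH, Real.sqrt_pos.2 hlH, (Real.sq_sqrt hlH.le).symm⟩
  have s1 : Real.sqrt (q ^ 2 * p ^ 2) = p * q := by
    rw [← mul_pow, Real.sqrt_sq (by positivity), mul_comm]
  have s2 : Real.sqrt (p ^ 2 / q ^ 2) = p / q := by
    rw [← div_pow, Real.sqrt_sq (by positivity)]
  have s3 : Real.sqrt (q ^ 2 / p ^ 2) = q / p := by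
    rw [← div_pow, Real.sqrt_sq (by positivity)]
  rw [s1] at hc
  simp only [s1, s2, s3]
  obtain ⟨W0, H0, h0⟩ := ufm_exists (n := n) p q hp hq hc hdK
  have hm := hmin W0 H0
  rw [ufm_g_eq p q hK hn, ufm_g_eq p q hK hn, h0] at hm
  have hpos : 0 < 1 / (2 * (K : ℝ) * n) := by positivity
  have hle : ufmRem p q Ws Hs ≤ 0 := by
    have := le_of_mul_le_mul_left hm hpos
    linarith
  have n1 : ∀ i : Fin n, 0 ≤ ∑ k, ∑ a, (p * Ws k a - q * Hs a (k, i)) ^ 2 := fun i => by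
    positivity
  have n2 : ∀ i : Fin n, 0 ≤ ∑ k, ∑ l,
      ((∑ a, Ws k a * Hs a (l, i)) - (if l = k then (1 - p * q) else 0)) ^ 2 := fun i =>
    Finset.sum_nonneg fun k _ => Finset.sum_nonneg fun l _ => sq_nonneg _
  have hz : ∀ i : Fin n, _ := fun i => (Finset.sum_eq_zero_iff_of_nonneg
    (fun i _ => add_nonneg (n1 i) (n2 i))).1
    (le_antisymm hle (Finset.sum_nonneg fun i _ => add_nonneg (n1 i) (n2 i))) i
    (Finset.mem_univ i)
  have a1 : ∀ (i : Fin n) (k : Fin K) (a : Fin d), Hs a (k, i) = p / q * Ws k a := by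
    intro i k a
    have h := hz i
    have h' : ∑ k, ∑ a, (p * Ws k a - q * Hs a (k, i)) ^ 2 = 0 := by
      linarith [n1 i, n2 i]
    have h2 := (Finset.sum_eq_zero_iff_of_nonneg
      (fun k _ => Finset.sum_nonneg fun a _ => sq_nonneg _)).1 h' k (Finset.mem_univ k)
    have h3 := (Finset.sum_eq_zero_iff_of_nonneg
      (fun a _ => sq_nonneg _)).1 h2 a (Finset.mem_univ a)
    have h4 := pow_eq_zero_iff (two_ne_zero) |>.1 h3
    field_simp
    linarith
  have a2 : ∀ (i : Fin n) (k l : Fin K),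
      (∑ a, Ws k a * Hs a (l, i)) = if l = k then (1 - p * q) else 0 := by
    intro i k l
    have h := hz i
    have h' : ∑ k, ∑ l,
      ((∑ a, Ws k a * Hs a (l, i)) - (if l = k then (1 - p * q) else 0)) ^ 2 = 0 := by
      linarith [n1 i, n2 i]
    have h2 := (Finset.sum_eq_zero_iff_of_nonneg
      (fun k _ => Finset.sum_nonneg fun a _ => sq_nonneg _)).1 h' k (Finset.mem_univ k)
    have h3 := (Finset.sum_eq_zero_iff_of_nonneg
      (fun a _ => sq_nonneg _)).1 h2 l (Finset.mem_univ l)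
    have h4 := pow_eq_zero_iff (two_ne_zero) |>.1 h3
    linarith
  have hn' : (n : ℝ) ≠ 0 := by positivity
  have a3 : ∀ (k : Fin K) (a : Fin d), classMean Hs k a = p / q * Ws k a := by
    intro k a
    simp only [classMean, a1, Finset.sum_const, Finset.card_univ, Fintype.card_fin, nsmul_eq_mul]
    field_simp
  have a4 : ∀ k k' : Fin K, ∑ a, classMean Hs k a * classMean Hs k' a
        = if k = k' then (1 - p * q) * (p / q) else 0 := by
    intro k k'
    have h := a2 ⟨0, hn⟩ k k'
    simp only [a1] at h
    have : ∑ a, classMean Hs k a * classMean Hs k' a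
        = (p / q) * ∑ a, Ws k a * (p / q * Ws k' a) := by
      rw [Finset.mul_sum]
      refine Finset.sum_congr rfl fun a _ => ?_
      rw [a3, a3]; ring
    rw [this, h]
    by_cases hk : k = k'
    · simp [hk]; ring
    · simp [hk, Ne.symm hk]
  refine ⟨fun k i a => by rw [a1, a3], fun k => ?_, a4, fun k a => ?_⟩
  · have := a4 k k
    simpa [sq] using this
  · rw [a3]; field_simp

end
end

section
/- Let d ≥ K, λ_W > 0, λ_H > 0, c := √(λ_H λ_W) < 1 and ρ := (1 − c)√(λ_W/λ_H). For any R ∈ ℝ^{d×K} with RᵀR = I_K, the pair defined by H* := √ρ · (R ⊗ 1_nᵀ) (the matrix whose n columns of class k all equal √ρ · r_k, where r_k is the k-th column of R) and W* := √(λ_H/λ_W) · √ρ · Rᵀ is a global minimizer of g. -/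
open Matrix Filter
open scoped BigOperators

noncomputable section

variable {K n d : ℕ}

/-- The per-sample objective. -/
def perSample {K d : ℕ} (lW lH : ℝ) (A : Matrix (Fin K) (Fin d) ℝ)
    (B : Matrix (Fin d) (Fin K) ℝ) : ℝ :=
  frobSq (A * B - 1) + lW * frobSq A + lH * frobSq B

theorem g_eq_sum {K n d : ℕ} (hK : 0 < K) (hn : 0 < n) (lW lH : ℝ)
    (W : Matrix (Fin K) (Fin d) ℝ) (H : Matrix (Fin d) (Fin K × Fin n) ℝ) :
    g lW lH W H = (1 / (2 * (K : ℝ) * n)) *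
      ∑ i : Fin n, perSample lW lH W (Matrix.of fun a k => H a (k, i)) := by
  have hK' : (K : ℝ) ≠ 0 := by positivity
  have hn' : (n : ℝ) ≠ 0 := by positivity
  have h1 : ∀ {m : ℕ} (M : Matrix (Fin m) (Fin K × Fin n) ℝ),
      frobSq M = ∑ i : Fin n, frobSq (Matrix.of fun a k => M a (k, i)) := by
    intro m M
    unfold frobSq
    rw [Finset.sum_comm (s := (Finset.univ : Finset (Fin n)))]
    refine Finset.sum_congr rfl fun a _ => ?_
    rw [Fintype.sum_prod_type, Finset.sum_comm]
    rfl
  have h2 : ∀ i : Fin n, (Matrix.of fun a k => (W * H - Ymat K n) a (k, i))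
      = W * (Matrix.of fun a k => H a (k, i)) - 1 := by
    intro i
    ext a k
    simp [Matrix.mul_apply, Ymat, Matrix.one_apply, eq_comm]
  unfold g perSample
  rw [h1 (W * H - Ymat K n), h1 H, Finset.sum_add_distrib, Finset.sum_add_distrib,
    ← Finset.mul_sum, ← Finset.mul_sum]
  simp only [h2, Finset.sum_const, Finset.card_univ, Fintype.card_fin, nsmul_eq_mul]
  field_simp

theorem perSample_lower {K d : ℕ} (sW sH : ℝ) (A : Matrix (Fin K) (Fin d) ℝ)
    (B : Matrix (Fin d) (Fin K) ℝ) :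
    (K : ℝ) * (1 - (1 - sH * sW) ^ 2) ≤ perSample (sW ^ 2) (sH ^ 2) A B := by
  have e1 : frobSq (A * B - 1) = frobSq (A * B - (1 - sH * sW) • (1 : Matrix (Fin K) (Fin K) ℝ))
      - 2 * (sH * sW) * (A * B).trace + (K : ℝ) * (1 - (1 - sH * sW) ^ 2) := by
    have hk : (K : ℝ) * (1 - (1 - sH * sW) ^ 2) =
        ∑ k : Fin K, (1 - (1 - sH * sW) ^ 2) := by
      rw [Finset.sum_const, Finset.card_univ, Fintype.card_fin, nsmul_eq_mul]
    rw [hk]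
    unfold frobSq Matrix.trace
    rw [Finset.mul_sum, ← Finset.sum_sub_distrib, ← Finset.sum_add_distrib]
    refine Finset.sum_congr rfl fun k _ => ?_
    have ha : ∀ F : Fin K → ℝ, ∑ j, F j = F k + ∑ j ∈ Finset.univ.erase k, F j := fun F =>
      (Finset.add_sum_erase _ _ (Finset.mem_univ k)).symm
    rw [ha, ha (fun j => ((A * B - (1 - sH * sW) • (1 : Matrix (Fin K) (Fin K) ℝ)) k j) ^ 2)]
    have hb : ∑ j ∈ Finset.univ.erase k, ((A * B - (1 : Matrix (Fin K) (Fin K) ℝ)) k j) ^ 2 = ∑ j ∈ Finset.univ.erase k,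
        ((A * B - (1 - sH * sW) • (1 : Matrix (Fin K) (Fin K) ℝ)) k j) ^ 2 := by
      refine Finset.sum_congr rfl fun j hj => ?_
      have : k ≠ j := (Finset.ne_of_mem_erase hj).symm
      simp [Matrix.one_apply, this]
    rw [hb]
    simp only [Matrix.sub_apply, Matrix.smul_apply, Matrix.one_apply_eq, Matrix.diag_apply,
      smul_eq_mul]
    ring
  have e2 : 2 * (sH * sW) * (A * B).trace ≤ sW ^ 2 * frobSq A + sH ^ 2 * frobSq B := by
    have : sW ^ 2 * frobSq A + sH ^ 2 * frobSq B - 2 * (sH * sW) * (A * B).trace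
        = ∑ k, ∑ a, (sW * A k a - sH * B a k) ^ 2 := by
      unfold frobSq Matrix.trace
      rw [Finset.sum_comm (f := fun i j => B i j ^ 2)]
      simp only [Matrix.diag_apply, Matrix.mul_apply, Finset.mul_sum]
      rw [← Finset.sum_add_distrib, ← Finset.sum_sub_distrib]
      refine Finset.sum_congr rfl fun k _ => ?_
      rw [← Finset.sum_add_distrib, ← Finset.sum_sub_distrib]
      refine Finset.sum_congr rfl fun a _ => ?_
      ring
    have h0 : 0 ≤ ∑ k, ∑ a, (sW * A k a - sH * B a k) ^ 2 := by positivity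
    linarith
  have e3 : 0 ≤ frobSq (A * B - (1 - sH * sW) • (1 : Matrix (Fin K) (Fin K) ℝ)) := by
    unfold frobSq; positivity
  unfold perSample
  linarith

theorem perSample_opt {K d : ℕ} (lW lH x y : ℝ) (R : Matrix (Fin d) (Fin K) ℝ)
    (hR : Rᵀ * R = 1) :
    perSample lW lH (x • Rᵀ) (y • R) =
      (K : ℝ) * ((x * y - 1) ^ 2 + lW * x ^ 2 + lH * y ^ 2) := by
  have hs : ∀ {m p : ℕ} (t : ℝ) (M : Matrix (Fin m) (Fin p) ℝ),
      frobSq (t • M) = t ^ 2 * frobSq M := by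
    intro m p t M
    simp [frobSq, Finset.mul_sum, mul_pow]
  have hT : frobSq Rᵀ = K := by
    have h := congrArg Matrix.trace hR
    simp only [Matrix.trace, Matrix.diag_apply, Matrix.mul_apply, Matrix.one_apply_eq] at h
    simp only [Finset.sum_const, Finset.card_univ, Fintype.card_fin, nsmul_eq_mul, mul_one] at h
    rw [← h]
    simp [frobSq, sq]
  have hRR : frobSq R = K := by
    rw [← hT]; unfold frobSq; rw [Finset.sum_comm]; rfl
  have h1 : frobSq (1 : Matrix (Fin K) (Fin K) ℝ) = K := by
    simp [frobSq, Matrix.one_apply]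
  have hX : (x • Rᵀ) * (y • R) - 1 = (x * y - 1) • (1 : Matrix (Fin K) (Fin K) ℝ) := by
    rw [Matrix.smul_mul, Matrix.mul_smul, hR, smul_smul, sub_smul, one_smul]
  unfold perSample
  rw [hX, hs, hs, hs, hT, hRR, h1]
  ring

/-- for any partial orthonormal matrix `R ∈ ℝ^{d×K}` (`RᵀR = I_K`), the pair
`H* = √ρ (R ⊗ 1_nᵀ)`, `W* = √(λ_H/λ_W) √ρ Rᵀ` is a global minimizer of `g`,
where `ρ = (1-c)√(λ_W/λ_H)` and `c = √(λ_H λ_W) < 1`. -/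
theorem orthonormal_frame_is_ufm_minimizer
    (K n d : ℕ) (hK : 0 < K) (hn : 0 < n) (hdK : K ≤ d)
    (lW lH : ℝ) (hlW : 0 < lW) (hlH : 0 < lH)
    (hc : Real.sqrt (lH * lW) < 1)
    (R : Matrix (Fin d) (Fin K) ℝ) (hR : Rᵀ * R = 1) :
    ∀ (W : Matrix (Fin K) (Fin d) ℝ) (H : Matrix (Fin d) (Fin K × Fin n) ℝ),
      g lW lH
        ((Real.sqrt (lH / lW) *
            Real.sqrt ((1 - Real.sqrt (lH * lW)) * Real.sqrt (lW / lH))) • Rᵀ)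
        (Matrix.of (fun a p =>
            Real.sqrt ((1 - Real.sqrt (lH * lW)) * Real.sqrt (lW / lH)) * R a p.1 :
          Fin d → Fin K × Fin n → ℝ))
      ≤ g lW lH W H := by
  intro W H
  obtain ⟨sW, hsW, rfl⟩ : ∃ s : ℝ, 0 < s ∧ lW = s ^ 2 :=
    ⟨Real.sqrt lW, Real.sqrt_pos.2 hlW, (Real.sq_sqrt hlW.le).symm⟩
  obtain ⟨sH, hsH, rfl⟩ : ∃ s : ℝ, 0 < s ∧ lH = s ^ 2 :=
    ⟨Real.sqrt lH, Real.sqrt_pos.2 hlH, (Real.sq_sqrt hlH.le).symm⟩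
  have q1 : Real.sqrt (sH ^ 2 * sW ^ 2) = sH * sW := by
    rw [← mul_pow]; exact Real.sqrt_sq (by positivity)
  have q2 : Real.sqrt (sH ^ 2 / sW ^ 2) = sH / sW := by
    rw [← div_pow]; exact Real.sqrt_sq (by positivity)
  have q3 : Real.sqrt (sW ^ 2 / sH ^ 2) = sW / sH := by
    rw [← div_pow]; exact Real.sqrt_sq (by positivity)
  rw [q1] at hc
  rw [q1, q2, q3]
  have hy : Real.sqrt ((1 - sH * sW) * (sW / sH)) ^ 2 = (1 - sH * sW) * (sW / sH) :=
    Real.sq_sqrt (mul_nonneg (by linarith) (by positivity))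
  generalize Real.sqrt ((1 - sH * sW) * (sW / sH)) = y at hy ⊢
  rw [g_eq_sum hK hn, g_eq_sum hK hn]
  refine mul_le_mul_of_nonneg_left (Finset.sum_le_sum fun i _ => ?_) (by positivity)
  refine le_trans (le_of_eq ?_) (perSample_lower sW sH W _)
  refine (perSample_opt (sW ^ 2) (sH ^ 2) (sH / sW * y) y R hR).trans ?_
  congr 1
  have a1 : sH / sW * y * y = 1 - sH * sW := by
    rw [mul_assoc, ← sq, hy]; field_simp
  rw [a1, mul_pow, hy]
  field_simp
  ring

end
end

section
/- For every H ∈ ℝ^{d×Kn} and λ_W > 0, the matrix H Hᵀ + n λ_W I_d is invertible, the map W ↦ g(W,H) has a unique global minimizer over ℝ^{K×d} given by W*(H) := Y Hᵀ (H Hᵀ + n λ_W I_d)^{-1}, and moreover W*(H) = (1/K) H̄ᵀ (Σ̃_T(H) + (λ_W/K) I_d)^{-1}, where H̄ = [h̄_1, …, h̄_K] ∈ ℝ^{d×K} is the matrix of class means. -/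
open Matrix Filter
open scoped BigOperators

noncomputable section

variable {K n d : ℕ}

theorem frobSq_eq_trace_aux {m p : Type*} [Fintype m] [Fintype p] (M : Matrix m p ℝ) :
    frobSq M = (M * Mᵀ).trace := by
  simp [frobSq, Matrix.trace, Matrix.mul_apply, pow_two]

theorem frobSq_add_aux {m p : Type*} [Fintype m] [Fintype p] (A B : Matrix m p ℝ) :
    frobSq (A + B) = frobSq A + 2 * (A * Bᵀ).trace + frobSq B := by
  have h : (B * Aᵀ).trace = (A * Bᵀ).trace := by
    rw [← Matrix.trace_transpose (B * Aᵀ), Matrix.transpose_mul, Matrix.transpose_transpose]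
  simp only [frobSq_eq_trace_aux, Matrix.transpose_add, Matrix.add_mul, Matrix.mul_add,
    Matrix.trace_add, h]
  ring

theorem frobSq_nonneg_aux {m p : Type*} [Fintype m] [Fintype p] (A : Matrix m p ℝ) :
    0 ≤ frobSq A :=
  Finset.sum_nonneg fun _ _ => Finset.sum_nonneg fun _ _ => sq_nonneg _

theorem frobSq_pos_aux {m p : Type*} [Fintype m] [Fintype p] (A : Matrix m p ℝ) (h : A ≠ 0) :
    0 < frobSq A := by
  refine lt_of_le_of_ne (frobSq_nonneg_aux A) fun h0 => h ?_
  ext i j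
  have h1 := (Finset.sum_eq_zero_iff_of_nonneg
    (fun i _ => Finset.sum_nonneg fun j _ => sq_nonneg (A i j))).1 h0.symm i (Finset.mem_univ i)
  have h2 := (Finset.sum_eq_zero_iff_of_nonneg
    (fun j _ => sq_nonneg (A i j))).1 h1 j (Finset.mem_univ j)
  simpa using h2

/-- for every `H` and `λ_W > 0`, the matrix `H Hᵀ + n λ_W I_d` is invertible;
`W ↦ g(W,H)` has the unique global minimizer `W*(H) = Y Hᵀ (H Hᵀ + n λ_W I_d)⁻¹`; and
`W*(H) = (1/K) H̄ᵀ (Σ̃_T(H) + (λ_W/K) I_d)⁻¹`. -/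
theorem Wstar_unique_minimizer
    (K n d : ℕ) (hK : 0 < K) (hn : 0 < n) (hdK : K ≤ d)
    (lW lH : ℝ) (hlW : 0 < lW) (hlH : 0 < lH)
    (H : Matrix (Fin d) (Fin K × Fin n) ℝ) :
    IsUnit (H * Hᵀ + ((n : ℝ) * lW) • (1 : Matrix (Fin d) (Fin d) ℝ)).det ∧
    (∀ W : Matrix (Fin K) (Fin d) ℝ, W ≠ Wstar lW H →
      g lW lH (Wstar lW H) H < g lW lH W H) ∧
    Wstar lW H = (1 / (K : ℝ)) •
      ((Hbar H)ᵀ * (SigmaTtil H + (lW / (K : ℝ)) • (1 : Matrix (Fin d) (Fin d) ℝ))⁻¹) := by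
  have hK' : (0 : ℝ) < K := by exact_mod_cast hK
  have hn' : (0 : ℝ) < n := by exact_mod_cast hn
  have hunit : IsUnit (H * Hᵀ + ((n : ℝ) * lW) • (1 : Matrix (Fin d) (Fin d) ℝ)).det := by
    have h1 : (H * Hᵀ).PosSemidef := by
      simpa using Matrix.posSemidef_self_mul_conjTranspose H
    have h2 : (((n : ℝ) * lW) • (1 : Matrix (Fin d) (Fin d) ℝ)).PosDef :=
      Matrix.PosDef.one.smul (mul_pos hn' hlW)
    exact (Matrix.PosDef.posSemidef_add h1 h2).det_pos.ne'.isUnit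
  refine ⟨hunit, ?_, ?_⟩
  · intro W hW
    have hS : Wstar lW H * (H * Hᵀ + ((n : ℝ) * lW) • (1 : Matrix (Fin d) (Fin d) ℝ))
        = Ymat K n * Hᵀ := by
      rw [Wstar, Matrix.mul_assoc, Matrix.nonsing_inv_mul _ hunit, Matrix.mul_one]
    generalize Wstar lW H = S at hS hW
    obtain ⟨D, rfl⟩ : ∃ D, W = S + D := ⟨W - S, by abel⟩
    have hD : D ≠ 0 := by rintro rfl; simp at hW
    have hpos := frobSq_pos_aux D hD
    have hnn := frobSq_nonneg_aux (D * H)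
    have e1 : (S + D) * H - Ymat K n = (S * H - Ymat K n) + D * H := by
      rw [Matrix.add_mul]; abel
    have cross : ((S * H - Ymat K n) * (D * H)ᵀ).trace + n * lW * (S * Dᵀ).trace = 0 := by
      have : (S * H - Ymat K n) * (D * H)ᵀ + (n * lW : ℝ) • (S * Dᵀ) = 0 := by
        have h3 : (S * (H * Hᵀ) + (n * lW : ℝ) • S - Ymat K n * Hᵀ) * Dᵀ = 0 := by
          rw [← hS]; simp [Matrix.mul_add]
        rw [← h3, Matrix.transpose_mul]
        simp only [Matrix.sub_mul, Matrix.add_mul, Matrix.mul_assoc, Matrix.smul_mul]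
        abel
      have h4 := congrArg Matrix.trace this
      simpa using h4
    unfold g
    rw [e1, frobSq_add_aux, frobSq_add_aux]
    have key : (1 / (2 * (K : ℝ) * n)) * (2 * ((S * H - Ymat K n) * (D * H)ᵀ).trace)
        + (lW / (2 * (K : ℝ))) * (2 * (S * Dᵀ).trace) = 0 := by
      have : (1 / (2 * (K : ℝ) * n)) * (2 * ((S * H - Ymat K n) * (D * H)ᵀ).trace)
        + (lW / (2 * (K : ℝ))) * (2 * (S * Dᵀ).trace) = (1 / (K * n)) *
          (((S * H - Ymat K n) * (D * H)ᵀ).trace + n * lW * (S * Dᵀ).trace) := by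
        field_simp
      rw [this, cross, mul_zero]
    have p1 : 0 < (lW / (2 * (K : ℝ))) * frobSq D := by positivity
    have p2 : 0 ≤ (1 / (2 * (K : ℝ) * n)) * frobSq (D * H) := by positivity
    linarith
  · have hA : SigmaTtil H + (lW / (K : ℝ)) • (1 : Matrix (Fin d) (Fin d) ℝ)
        = (1 / ((K : ℝ) * n)) • (H * Hᵀ + ((n : ℝ) * lW) • (1 : Matrix (Fin d) (Fin d) ℝ)) := by
      rw [SigmaTtil, smul_add, smul_smul]
      congr 2
      field_simp
    have hY : Ymat K n * Hᵀ = (n : ℝ) • (Hbar H)ᵀ := by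
      ext k a
      simp [Ymat, Hbar, classMean, Matrix.mul_apply, Fintype.sum_prod_type, hn'.ne']
      rw [Finset.sum_comm]
      simp
    have hinv : (SigmaTtil H + (lW / (K : ℝ)) • (1 : Matrix (Fin d) (Fin d) ℝ))⁻¹
        = ((K : ℝ) * n) •
          (H * Hᵀ + ((n : ℝ) * lW) • (1 : Matrix (Fin d) (Fin d) ℝ))⁻¹ := by
      rw [hA]
      apply Matrix.inv_eq_right_inv
      rw [Matrix.smul_mul, Matrix.mul_smul, smul_smul, Matrix.mul_nonsing_inv _ hunit]
      rw [one_div, inv_mul_cancel₀ (by positivity), one_smul]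
    rw [hinv, Wstar, hY, Matrix.smul_mul, Matrix.mul_smul, smul_smul]
    congr 1
    field_simp

end
end

section
/- The central-path loss L is differentiable at every H ∈ ℝ^{d×Kn}, and its gradient with respect to the Frobenius inner product is ∇L(H) = (1/(K²n)) [ A^{-1}(H − H̄ ⊗ 1_nᵀ) − A^{-1}(Σ_W(H) + (λ_W/K) I_d) A^{-1} H + λ_H K H ], where A := Σ̃_T(H) + (λ_W/K) I_d, H̄ = [h̄_1, …, h̄_K] ∈ ℝ^{d×K} is the matrix of class means, and H̄ ⊗ 1_nᵀ is the matrix whose n columns of class k all equal h̄_k. -/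
open Matrix Filter
open scoped BigOperators

noncomputable section

variable {K n d : ℕ}

attribute [local instance] Matrix.normedAddCommGroup Matrix.normedSpace

/-- The Frobenius inner product against a fixed matrix `G`, as a linear functional. -/
def frobInner {m p : Type*} [Fintype m] [Fintype p] (G : Matrix m p ℝ) :
    Matrix m p ℝ →ₗ[ℝ] ℝ where
  toFun V := ∑ i, ∑ j, G i j * V i j
  map_add' x y := by
    simp only [Matrix.add_apply, mul_add, Finset.sum_add_distrib]
  map_smul' c x := by
    simp only [Matrix.smul_apply, smul_eq_mul, RingHom.id_apply, Finset.mul_sum]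
    ring_nf
    simp [mul_comm, mul_left_comm]

lemma cp_diff_det {E m : Type*} [NormedAddCommGroup E] [NormedSpace ℝ E] [Fintype m]
    [DecidableEq m] (f : E → Matrix m m ℝ) (x : E)
    (hf : ∀ i j, DifferentiableAt ℝ (fun y => f y i j) x) :
    DifferentiableAt ℝ (fun y => (f y).det) x := by
  simp only [Matrix.det_apply']
  refine DifferentiableAt.fun_sum fun σ _ => DifferentiableAt.const_mul ?_ _
  exact (HasFDerivAt.finset_prod (g := fun i y => f y (σ i) i)
    fun i _ => (hf (σ i) i).hasFDerivAt).differentiableAt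

lemma cp_diff_inv {E m : Type*} [NormedAddCommGroup E] [NormedSpace ℝ E] [Fintype m]
    [DecidableEq m] (f : E → Matrix m m ℝ) (x : E)
    (hf : ∀ i j, DifferentiableAt ℝ (fun y => f y i j) x) (h0 : (f x).det ≠ 0) (i j : m) :
    DifferentiableAt ℝ (fun y => (f y)⁻¹ i j) x := by
  simp only [Matrix.inv_def, Matrix.smul_apply, smul_eq_mul, Ring.inverse_eq_inv',
    Matrix.adjugate_apply]
  refine DifferentiableAt.mul ((cp_diff_det f x hf).inv h0) (cp_diff_det _ x ?_)
  intro k l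
  simp only [Matrix.updateRow_apply]
  split_ifs
  · exact differentiableAt_const _
  · exact hf _ _

def cpE {m p : Type*} [Fintype m] [Fintype p] (i : m) (j : p) : Matrix m p ℝ →L[ℝ] ℝ :=
  LinearMap.toContinuousLinearMap (Matrix.entryLinearMap ℝ ℝ i j)

lemma cpE_apply {m p : Type*} [Fintype m] [Fintype p] (i : m) (j : p) (V : Matrix m p ℝ) :
    cpE i j V = V i j := rfl

lemma cp_entry {m p : Type*} [Fintype m] [Fintype p] (i : m) (j : p) (H : Matrix m p ℝ) :
    HasFDerivAt (fun M : Matrix m p ℝ => M i j) (cpE i j) H :=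
  (cpE i j).hasFDerivAt

lemma cp_Wstar_apply {K n d : ℕ} (lW : ℝ) (M : Matrix (Fin d) (Fin K × Fin n) ℝ)
    (k : Fin K) (a : Fin d) : Wstar lW M k a = ∑ b, (∑ p, Ymat K n k p * M b p) *
      (M * Mᵀ + ((n : ℝ) * lW) • (1 : Matrix (Fin d) (Fin d) ℝ))⁻¹ b a := by
  rw [Wstar, Matrix.mul_apply]
  refine Finset.sum_congr rfl fun b _ => ?_
  rw [Matrix.mul_apply]
  rfl

lemma cp_frobSq {E m p : Type*} [NormedAddCommGroup E] [NormedSpace ℝ E] [Fintype m]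
    [Fintype p] (f : E → Matrix m p ℝ) (x : E) (f' : m → p → E →L[ℝ] ℝ)
    (hf : ∀ i j, HasFDerivAt (fun y => f y i j) (f' i j) x) (c : ℝ) :
    ∃ L : E →L[ℝ] ℝ, HasFDerivAt (fun y => c * frobSq (f y)) L x ∧
      ∀ V, L V = c * (2 * ∑ i, ∑ j, f x i j * f' i j V) := by
  refine ⟨c • ∑ i, ∑ j, (2 * f x i j) • f' i j, ?_, ?_⟩
  · unfold frobSq
    refine HasFDerivAt.const_mul ?_ c
    refine HasFDerivAt.fun_sum fun i _ => HasFDerivAt.fun_sum fun j _ => ?_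
    have := (hf i j).pow 2
    simpa using this
  · intro V
    simp [Finset.mul_sum, mul_assoc]

lemma cp_prod {E m q p : Type*} [NormedAddCommGroup E] [NormedSpace ℝ E] [Fintype q]
    (f : E → Matrix m q ℝ) (h : E → Matrix q p ℝ) (Y : Matrix m p ℝ) (x : E)
    (f' : m → q → E →L[ℝ] ℝ) (h' : q → p → E →L[ℝ] ℝ)
    (hf : ∀ i j, HasFDerivAt (fun y => f y i j) (f' i j) x)
    (hh : ∀ i j, HasFDerivAt (fun y => h y i j) (h' i j) x) (i : m) (j : p) :
    ∃ L : E →L[ℝ] ℝ, HasFDerivAt (fun y => (f y * h y - Y) i j) L x ∧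
      ∀ V, L V = ∑ a, f x i a * h' a j V + ∑ a, f' i a V * h x a j := by
  refine ⟨∑ a, (f x i a • h' a j + h x a j • f' i a), ?_, ?_⟩
  · simp only [Matrix.sub_apply, Matrix.mul_apply]
    exact (HasFDerivAt.fun_sum fun a _ => (hf i a).mul (hh a j)).sub_const _
  · intro V
    simp [Finset.sum_add_distrib, mul_comm]

lemma cp_add3 {E : Type*} [NormedAddCommGroup E] [NormedSpace ℝ E]
    (f g h : E → ℝ) (L f' g' h' : E →L[ℝ] ℝ) (x : E)
    (hf : HasFDerivAt f f' x) (hg : HasFDerivAt g g' x) (hh : HasFDerivAt h h' x)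
    (hL : ∀ V, f' V + g' V + h' V = L V) :
    HasFDerivAt (fun y => f y + g y + h y) L x := by
  refine ((hf.fun_add hg).fun_add hh).congr_fderiv ?_
  ext V
  simpa using hL V

lemma cp_ip_mul {m p q : Type*} [Fintype m] [Fintype p] [Fintype q]
    (A : Matrix m p ℝ) (B : Matrix m q ℝ) (C : Matrix q p ℝ) :
    frobInner A (B * C) = frobInner (A * Cᵀ) B := by
  simp only [frobInner, LinearMap.coe_mk, AddHom.coe_mk, Matrix.mul_apply, Finset.mul_sum,
    Finset.sum_mul, Matrix.transpose_apply]
  refine Finset.sum_congr rfl fun i _ => ?_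
  rw [Finset.sum_comm]
  refine Finset.sum_congr rfl fun k _ => Finset.sum_congr rfl fun j _ => ?_
  ring

lemma cp_ip_mul' {m p q : Type*} [Fintype m] [Fintype p] [Fintype q]
    (A : Matrix m p ℝ) (B : Matrix m q ℝ) (C : Matrix q p ℝ) :
    frobInner A (B * C) = frobInner (Bᵀ * A) C := by
  simp only [frobInner, LinearMap.coe_mk, AddHom.coe_mk, Matrix.mul_apply, Finset.mul_sum,
    Finset.sum_mul, Matrix.transpose_apply]
  simp_rw [Finset.sum_comm (s := (Finset.univ : Finset p)) (t := (Finset.univ : Finset q))]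
  rw [Finset.sum_comm]
  refine Finset.sum_congr rfl fun i _ => ?_
  rw [Finset.sum_comm]
  refine Finset.sum_congr rfl fun k _ => Finset.sum_congr rfl fun j _ => ?_
  ring

lemma cp_ip_add {m p : Type*} [Fintype m] [Fintype p] (A B V : Matrix m p ℝ) :
    frobInner (A + B) V = frobInner A V + frobInner B V := by
  simp only [frobInner, LinearMap.coe_mk, AddHom.coe_mk, Matrix.add_apply, add_mul,
    Finset.sum_add_distrib]

lemma cp_ip_smul {m p : Type*} [Fintype m] [Fintype p] (c : ℝ) (A V : Matrix m p ℝ) :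
    frobInner (c • A) V = c * frobInner A V := by
  simp only [frobInner, LinearMap.coe_mk, AddHom.coe_mk, Matrix.smul_apply, smul_eq_mul,
    Finset.mul_sum, mul_assoc]

lemma cp_P_pos {K n d : ℕ} (c : ℝ) (hc : 0 < c) (H : Matrix (Fin d) (Fin K × Fin n) ℝ) :
    (H * Hᵀ + c • (1 : Matrix (Fin d) (Fin d) ℝ)).det ≠ 0 := by
  have h1 : (H * Hᵀ).PosSemidef := by
    have := Matrix.posSemidef_self_mul_conjTranspose H
    rwa [Matrix.conjTranspose_eq_transpose_of_trivial] at this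
  have h2 : (c • (1 : Matrix (Fin d) (Fin d) ℝ)).PosDef := Matrix.PosDef.one.smul hc
  exact (Matrix.PosDef.posSemidef_add h1 h2).det_pos.ne'

lemma cp_HYY {K n d : ℕ} (hn : 0 < n) (H : Matrix (Fin d) (Fin K × Fin n) ℝ) :
    H * (Ymat K n)ᵀ * Ymat K n = (n : ℝ) • HbarSpread H := by
  have hn' : (n : ℝ) ≠ 0 := by positivity
  ext a p
  simp [Matrix.mul_apply, Ymat, HbarSpread, classMean, Fintype.sum_prod_type, hn']
  rw [Finset.sum_comm]
  simp

lemma cp_SigmaW {K n d : ℕ} (hn : 0 < n) (H : Matrix (Fin d) (Fin K × Fin n) ℝ) :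
    SigmaW H = (1 / ((K : ℝ) * n)) • (H * Hᵀ - HbarSpread H * Hᵀ) := by
  have hn' : (n : ℝ) ≠ 0 := by positivity
  ext a b
  simp only [SigmaW, Matrix.of_apply, Matrix.smul_apply, Matrix.sub_apply, Matrix.mul_apply,
    HbarSpread, Matrix.transpose_apply, smul_eq_mul, Fintype.sum_prod_type]
  congr 1
  rw [← Finset.sum_sub_distrib]
  refine Finset.sum_congr rfl fun k _ => ?_
  have e : ∀ a, ∑ i, H a (k, i) = n * classMean H k a := fun a => by
    simp [classMean, hn']
  simp only [sub_mul, mul_sub, Finset.sum_sub_distrib, ← Finset.mul_sum, ← Finset.sum_mul, e]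
  simp
  ring

/-- the central-path loss `L` is differentiable at every `H`, with gradient
(w.r.t. the Frobenius inner product)
`∇L(H) = (1/(K²n))[A⁻¹(H − H̄⊗1ᵀ) − A⁻¹(Σ_W + (λ_W/K)I)A⁻¹H + λ_H K H]`,
where `A = Σ̃_T(H) + (λ_W/K)I`. -/
theorem central_path_loss_gradient
    (K n d : ℕ) (hK : 0 < K) (hn : 0 < n) (hdK : K ≤ d)
    (lW lH : ℝ) (hlW : 0 < lW) (hlH : 0 ≤ lH)
    (H : Matrix (Fin d) (Fin K × Fin n) ℝ) :
    HasFDerivAt (Lcp lW lH)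
      ((frobInner (gradL lW lH H)).toContinuousLinearMap) H := by
  have hK' : (K : ℝ) ≠ 0 := by positivity
  have hn' : (n : ℝ) ≠ 0 := by positivity
  have hc : 0 < (n : ℝ) * lW := by positivity
  have hdet := cp_P_pos _ hc H
  have hent : ∀ i j, DifferentiableAt ℝ
      (fun M : Matrix (Fin d) (Fin K × Fin n) ℝ => M i j) H :=
    fun i j => (cp_entry i j H).differentiableAt
  have hW : ∀ k a, DifferentiableAt ℝ
      (fun M : Matrix (Fin d) (Fin K × Fin n) ℝ => Wstar lW M k a) H := by
    intro k a
    simp only [cp_Wstar_apply]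
    refine DifferentiableAt.fun_sum fun b _ => DifferentiableAt.fun_mul ?_ ?_
    · exact DifferentiableAt.fun_sum fun p _ => (hent _ _).const_mul _
    · refine cp_diff_inv _ H ?_ hdet _ _
      intro i j
      simp only [Matrix.add_apply, Matrix.mul_apply, Matrix.transpose_apply]
      exact (DifferentiableAt.fun_sum fun p _ => (hent _ _).fun_mul (hent _ _)).add_const _
  choose w' hw' using hW
  choose r' hr' hrV using fun k q => cp_prod (fun M => Wstar lW M)
    (fun M : Matrix (Fin d) (Fin K × Fin n) ℝ => M) (Ymat K n) H w' _ hw'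
    (fun i j => cp_entry i j H) k q
  obtain ⟨L1, h1, e1⟩ := cp_frobSq (fun M => Wstar lW M * M - Ymat K n) H r' hr'
    (1 / (2 * (K : ℝ) * n))
  obtain ⟨L2, h2, e2⟩ := cp_frobSq (fun M => Wstar lW M) H w' hw' (lW / (2 * (K : ℝ)))
  obtain ⟨L3, h3, e3⟩ := cp_frobSq (fun M : Matrix (Fin d) (Fin K × Fin n) ℝ => M) H _
    (fun i j => cp_entry i j H) (lH / (2 * (K : ℝ) * n))
  refine cp_add3 _ _ _ _ L1 L2 L3 H h1 h2 h3 ?_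
  intro V
  have key : ∀ (W D : Matrix (Fin K) (Fin d) ℝ), W = Wstar lW H →
      (1 / (2 * (K : ℝ) * n)) * (2 * frobInner (W * H - Ymat K n) (W * V + D * H)) +
      (lW / (2 * (K : ℝ))) * (2 * frobInner W D) +
      (lH / (2 * (K : ℝ) * n)) * (2 * frobInner H V) = frobInner (gradL lW lH H) V := by
    intro W D hWdef
    set P := H * Hᵀ + ((n : ℝ) * lW) • (1 : Matrix (Fin d) (Fin d) ℝ) with hP
    have hPu : IsUnit P.det := hdet.isUnit
    have hWP : W * P = Ymat K n * Hᵀ := by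
      rw [hWdef, Wstar, ← hP, Matrix.nonsing_inv_mul_cancel_right _ _ hPu]
    have hA : Amat lW H = (1 / ((K : ℝ) * n)) • P := by
      rw [Amat, SigmaTtil, hP, smul_add, smul_smul]
      congr 2
      field_simp
    have hAi : (Amat lW H)⁻¹ = ((K : ℝ) * n) • P⁻¹ := by
      rw [hA]
      apply Matrix.inv_eq_right_inv
      rw [Matrix.smul_mul, Matrix.mul_smul, smul_smul, Matrix.mul_nonsing_inv _ hPu,
        one_div_mul_cancel (by positivity), one_smul]
    have hPT : Pᵀ = P := by
      simp [hP]
    have hWT : Wᵀ = P⁻¹ * (H * (Ymat K n)ᵀ) := by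
      rw [hWdef, Wstar, ← hP, Matrix.transpose_mul, Matrix.transpose_nonsing_inv, hPT,
        Matrix.transpose_mul, Matrix.transpose_transpose]
    have hWY : Wᵀ * Ymat K n = (n : ℝ) • (P⁻¹ * HbarSpread H) := by
      rw [hWT, Matrix.mul_assoc, cp_HYY hn, Matrix.mul_smul]
    have hWW : Wᵀ * W = (n : ℝ) • (P⁻¹ * (HbarSpread H * Hᵀ) * P⁻¹) := by
      have : W = Ymat K n * Hᵀ * P⁻¹ := hWdef
      nth_rewrite 2 [this]
      rw [← Matrix.mul_assoc, ← Matrix.mul_assoc, hWY]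
      simp only [Matrix.smul_mul, Matrix.mul_assoc]
    have hS : SigmaW H + (lW / (K : ℝ)) • 1 = (1 / ((K : ℝ) * n)) • (P - HbarSpread H * Hᵀ) := by
      rw [cp_SigmaW hn, hP, ← sub_add_eq_add_sub, smul_add _ (_ - _), smul_smul]
      congr 2
      field_simp
    have hgrad : gradL lW lH H = (1 / ((K : ℝ) * n)) • (Wᵀ * (W * H - Ymat K n) + lH • H) := by
      have e1 : P⁻¹ * (P - HbarSpread H * Hᵀ) * P⁻¹ = P⁻¹ - P⁻¹ * (HbarSpread H * Hᵀ) * P⁻¹ := by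
        rw [Matrix.mul_sub, Matrix.sub_mul, Matrix.nonsing_inv_mul _ hPu, Matrix.one_mul]
      rw [Matrix.mul_sub, ← Matrix.mul_assoc, hWW, hWY, gradL, hAi, hS]
      simp only [Matrix.smul_mul, Matrix.mul_smul, smul_smul, e1]
      simp only [Matrix.mul_sub, Matrix.sub_mul]
      ext a p
      simp only [Matrix.smul_apply, Matrix.add_apply, Matrix.sub_apply, smul_eq_mul]
      field_simp
      ring
    have hzero : (W * H - Ymat K n) * Hᵀ + ((n : ℝ) * lW) • W = 0 := by
      rw [Matrix.sub_mul, ← hWP, hP, Matrix.mul_add, Matrix.mul_smul, Matrix.mul_one,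
        Matrix.mul_assoc]
      abel
    have hz : frobInner ((W * H - Ymat K n) * Hᵀ) D + (n : ℝ) * lW * frobInner W D = 0 := by
      rw [← cp_ip_smul, ← cp_ip_add, hzero]
      simp [frobInner]
    rw [map_add, cp_ip_mul', cp_ip_mul _ D H, hgrad, cp_ip_smul, cp_ip_add, cp_ip_smul,
      eq_neg_of_add_eq_zero_left hz]
    field_simp
    ring
  have := key (Wstar lW H) (Matrix.of fun k a => w' k a V) rfl
  refine Eq.trans ?_ this
  rw [e1, e2, e3]
  simp only [hrV]
  rfl

end
end

section
/- Let λ_W > 0, λ_H ≥ 0 and let t ↦ H_t be a gradient-flow trajectory on the central path. At every time t ≥ 0 at which tr(Σ_W(H_t)) > 0 and tr(Σ_B(H_t)) > 0, the function s ↦ ÑC₁(H_s) := tr(Σ_W(H_s))/tr(Σ_B(H_s)) is differentiable at t with strictly negative derivative; hence ÑC₁(H_t) strictly decreases along the flow as long as it has not reached zero. -/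
open Matrix Filter
open scoped BigOperators

noncomputable section

variable {K n d : ℕ}

/-- Class-averaging projection. -/
def Qmat (K n : ℕ) : Matrix (Fin K × Fin n) (Fin K × Fin n) ℝ :=
  Matrix.of fun p q => if p.1 = q.1 then 1 / (n : ℝ) else 0

/-- Centered class mean map. -/
def Rmat (K n : ℕ) : Matrix (Fin K × Fin n) (Fin K) ℝ :=
  Matrix.of fun p k => (if p.1 = k then 1 / (n : ℝ) else 0) - 1 / ((K : ℝ) * n)

lemma HbarSpread_eq (H : Matrix (Fin d) (Fin K × Fin n) ℝ) : HbarSpread H = H * Qmat K n := by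
  ext a p
  simp only [HbarSpread, classMean, Qmat, Matrix.mul_apply, Matrix.of_apply, Fintype.sum_prod_type]
  rw [Finset.sum_eq_single p.1]
  · simp [Finset.mul_sum, mul_comm]
  · intro b _ hb
    simp [hb]
  · simp

lemma Zmat_eq (H : Matrix (Fin d) (Fin K × Fin n) ℝ) (a : Fin d) (k : Fin K) :
    classMean H k a - globalMean H a = (H * Rmat K n) a k := by
  simp only [globalMean, classMean, Rmat, Matrix.mul_apply, Matrix.of_apply, mul_sub,
    Finset.sum_sub_distrib]
  congr 1
  · rw [Fintype.sum_prod_type, Finset.sum_eq_single k]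
    · simp [Finset.mul_sum, mul_comm]
    · intro b _ hb
      simp [hb]
    · simp
  · rw [Finset.mul_sum]
    exact Finset.sum_congr rfl fun _ _ => mul_comm _ _

lemma Qmat_symm : (Qmat K n)ᵀ = Qmat K n := by
  ext p q
  simp [Qmat, eq_comm]

lemma Q_mul_Q (hn : 0 < n) : Qmat K n * Qmat K n = Qmat K n := by
  have hn' : (n : ℝ) ≠ 0 := by positivity
  ext p q
  simp only [Qmat, Matrix.mul_apply, Matrix.of_apply, Fintype.sum_prod_type]
  rw [Finset.sum_eq_single p.1]
  · by_cases h : p.1 = q.1 <;> simp [h, hn']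
  · intro b _ hb
    simp [hb.symm]
  · simp

lemma Q_mul_R (hn : 0 < n) : Qmat K n * Rmat K n = Rmat K n := by
  have hn' : (n : ℝ) ≠ 0 := by positivity
  ext p q
  simp only [Qmat, Rmat, Matrix.mul_apply, Matrix.of_apply, Fintype.sum_prod_type]
  rw [Finset.sum_eq_single p.1]
  · by_cases h : p.1 = q <;> simp [h, hn']
  · intro b _ hb
    simp [hb.symm]
  · simp

lemma SigmaW_eq (H : Matrix (Fin d) (Fin K × Fin n) ℝ) :
    SigmaW H = (1 / ((K : ℝ) * n)) • ((H * (1 - Qmat K n)) * (H * (1 - Qmat K n))ᵀ) := by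
  rw [Matrix.mul_sub, Matrix.mul_one, ← HbarSpread_eq]
  ext a b
  simp [SigmaW, HbarSpread, Matrix.mul_apply]

lemma trace_SigmaW (H : Matrix (Fin d) (Fin K × Fin n) ℝ) :
    (SigmaW H).trace = (1 / ((K : ℝ) * n)) * frobSq (H * (1 - Qmat K n)) := by
  rw [SigmaW_eq, Matrix.trace_smul, smul_eq_mul]
  generalize H * (1 - Qmat K n) = X
  simp [Matrix.trace, frobSq, Matrix.mul_apply, pow_two]

lemma trace_SigmaB (H : Matrix (Fin d) (Fin K × Fin n) ℝ) :
    (SigmaB H).trace = (1 / (K : ℝ)) * frobSq (H * Rmat K n) := by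
  simp only [Matrix.trace, SigmaB, frobSq, Zmat_eq, Matrix.diag, Matrix.of_apply, pow_two,
    ← Finset.mul_sum]

lemma hasDerivAt_frobSq {m p q : Type*} [Fintype m] [Fintype p] [Fintype q]
    (H : ℝ → Matrix m p ℝ) (G : Matrix m p ℝ) (C : Matrix p q ℝ) (t : ℝ)
    (h : ∀ a i, HasDerivAt (fun s => H s a i) (G a i) t) :
    HasDerivAt (fun s => frobSq (H s * C)) (2 * ((H t * C)ᵀ * (G * C)).trace) t := by
  have h1 : ∀ a j, HasDerivAt (fun s => (H s * C) a j) ((G * C) a j) t := by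
    intro a j
    simp only [Matrix.mul_apply]
    exact HasDerivAt.fun_sum fun i _ => (h a i).mul_const _
  have h2 : HasDerivAt (fun s => frobSq (H s * C))
      (∑ a, ∑ j, (2 * (H t * C) a j * (G * C) a j)) t := by
    unfold frobSq
    refine HasDerivAt.fun_sum fun a _ => HasDerivAt.fun_sum fun j _ => ?_
    simpa using (h1 a j).fun_pow 2
  convert h2 using 1
  simp only [Matrix.trace, Matrix.diag, Matrix.mul_apply (M := (H t * C)ᵀ), Matrix.transpose_apply]
  rw [Finset.sum_comm, Finset.mul_sum]
  simp only [Finset.mul_sum, mul_assoc]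

lemma trace_quad_nonneg {m q : Type*} [Fintype m] [Fintype q]
    {M : Matrix m m ℝ} (hM : M.PosSemidef) (Y : Matrix m q ℝ) :
    0 ≤ (Yᵀ * (M * Y)).trace := by
  have := (hM.conjTranspose_mul_mul_same Y).trace_nonneg
  rwa [Matrix.conjTranspose_eq_transpose_of_trivial, Matrix.mul_assoc] at this

lemma frobSq_eq {m q : Type*} [Fintype m] [Fintype q] (Y : Matrix m q ℝ) :
    frobSq Y = (Yᵀ * Y).trace := by
  simp only [Matrix.trace, Matrix.diag, Matrix.mul_apply, Matrix.transpose_apply, frobSq, pow_two]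
  exact Finset.sum_comm

lemma frobSq_pos {m q : Type*} [Fintype m] [Fintype q] {Y : Matrix m q ℝ} (h : Y ≠ 0) :
    0 < frobSq Y := by
  have h0 : 0 ≤ frobSq Y := Finset.sum_nonneg fun i _ => Finset.sum_nonneg fun j _ => sq_nonneg _
  refine lt_of_le_of_ne h0 fun he => h ?_
  ext i j
  have h1 := (Finset.sum_eq_zero_iff_of_nonneg
    (fun i _ => Finset.sum_nonneg fun j _ => sq_nonneg (Y i j))).1 he.symm i (Finset.mem_univ _)
  have h2 := (Finset.sum_eq_zero_iff_of_nonneg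
    (fun j _ => sq_nonneg (Y i j))).1 h1 j (Finset.mem_univ _)
  simpa using h2

lemma flow_algebra (hK : 0 < K) (hn : 0 < n) (lW lH : ℝ) (hlW : 0 < lW)
    (H : Matrix (Fin d) (Fin K × Fin n) ℝ) :
    (∃ M : Matrix (Fin d) (Fin d) ℝ, M.PosSemidef ∧
      (-((K : ℝ) * n)) • gradL lW lH H * (1 - Qmat K n) =
        (-(1 / (K : ℝ))) • (M * (H * (1 - Qmat K n))) - lH • (H * (1 - Qmat K n))) ∧
    (∃ P : Matrix (Fin d) (Fin d) ℝ,
      (∀ Y : Matrix (Fin d) (Fin K) ℝ, Y ≠ 0 → 0 < (Yᵀ * (P * Y)).trace) ∧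
      (-((K : ℝ) * n)) • gradL lW lH H * Rmat K n =
        (1 / (K : ℝ)) • (P * (H * Rmat K n)) - lH • (H * Rmat K n)) := by
  have hK' : (0 : ℝ) < K := by exact_mod_cast hK
  have hn' : (0 : ℝ) < n := by exact_mod_cast hn
  have hc : 0 < lW / (K : ℝ) := by positivity
  have hN : 0 ≤ 1 / ((K : ℝ) * n) := by positivity
  have hps : ∀ X : Matrix (Fin d) (Fin K × Fin n) ℝ,
      ((1 / ((K : ℝ) * n)) • (X * Xᵀ)).PosSemidef := by
    intro X
    have := (Matrix.posSemidef_self_mul_conjTranspose X).smul hN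
    rwa [Matrix.conjTranspose_eq_transpose_of_trivial] at this
  have hcI : ((lW / (K : ℝ)) • (1 : Matrix (Fin d) (Fin d) ℝ)).PosDef := Matrix.PosDef.one.smul hc
  have hApd : (Amat lW H).PosDef := by
    unfold Amat SigmaTtil
    exact Matrix.PosDef.posSemidef_add (hps H) hcI
  have hW : (SigmaW H).PosSemidef := by rw [SigmaW_eq]; exact hps _
  have hdiff : Amat lW H - (SigmaW H + (lW / (K : ℝ)) • 1) =
      (1 / ((K : ℝ) * n)) • ((H * Qmat K n) * (H * Qmat K n)ᵀ) := by
    rw [SigmaW_eq]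
    unfold Amat SigmaTtil
    rw [add_sub_add_right_eq_sub, ← smul_sub]
    congr 1
    have e1 : ∀ C : Matrix (Fin K × Fin n) (Fin K × Fin n) ℝ,
      (H * C) * (H * C)ᵀ = H * (C * Cᵀ) * Hᵀ := by
      intro C; simp only [Matrix.transpose_mul, Matrix.mul_assoc]
    rw [e1, e1, Matrix.transpose_sub, Matrix.transpose_one, Qmat_symm, Q_mul_Q hn]
    have : (1 - Qmat K n) * (1 - Qmat K n) = 1 - Qmat K n := by
      rw [Matrix.mul_sub, Matrix.sub_mul, Matrix.sub_mul, Q_mul_Q hn]; simp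
    rw [this]
    simp [Matrix.mul_sub, Matrix.sub_mul]
  have hAu : IsUnit (Amat lW H).det := (Matrix.isUnit_iff_isUnit_det _).1 hApd.isUnit
  have hAi : (Amat lW H)⁻¹ * Amat lW H = 1 := Matrix.nonsing_inv_mul _ hAu
  have hAi2 : Amat lW H * (Amat lW H)⁻¹ = 1 := Matrix.mul_nonsing_inv _ hAu
  have hAs : ((Amat lW H)⁻¹)ᵀ = (Amat lW H)⁻¹ := by
    have := hApd.inv.isHermitian.eq
    rwa [Matrix.conjTranspose_eq_transpose_of_trivial] at this
  have hB := hW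
  unfold gradL
  rw [HbarSpread_eq]
  generalize Amat lW H = A at *
  generalize SigmaW H = S at *
  have hcoef : -((K : ℝ) * n) * (1 / ((K : ℝ) ^ 2 * n)) = -(1 / (K : ℝ)) := by field_simp
  rw [smul_smul, hcoef]
  have hcoef2 : (1 / (K : ℝ)) * (lH * K) = lH := by field_simp
  constructor
  · refine ⟨A⁻¹ * (A - (S + (lW / (K : ℝ)) • 1)) * A⁻¹, ?_, ?_⟩
    · rw [hdiff]
      have := (hps (H * Qmat K n)).conjTranspose_mul_mul_same A⁻¹
      rwa [Matrix.conjTranspose_eq_transpose_of_trivial, hAs] at this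
    · generalize S + (lW / (K : ℝ)) • (1 : Matrix (Fin d) (Fin d) ℝ) = B
      rw [Matrix.mul_sub A⁻¹ A B, hAi, Matrix.sub_mul, Matrix.one_mul]
      have h1 : (H - H * Qmat K n) * (1 - Qmat K n) = H * (1 - Qmat K n) := by
        simp only [Matrix.mul_sub, Matrix.sub_mul, Matrix.mul_assoc, Q_mul_Q hn, Matrix.mul_one]
        simp
      rw [Matrix.smul_mul, Matrix.add_mul, Matrix.sub_mul, Matrix.mul_assoc A⁻¹ (H - _), h1,
        Matrix.mul_assoc (A⁻¹ * B * A⁻¹) H, Matrix.smul_mul, ← Matrix.sub_mul, smul_add, smul_smul,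
        neg_mul, hcoef2, neg_smul lH, sub_eq_add_neg _ (lH • _)]
  · refine ⟨A⁻¹ * (S + (lW / (K : ℝ)) • 1) * A⁻¹, ?_, ?_⟩
    · intro Y hY
      have hne : A⁻¹ * Y ≠ 0 := by
        intro h0
        apply hY
        rw [← Matrix.one_mul Y, ← hAi2, Matrix.mul_assoc, h0, Matrix.mul_zero]
      have e : Yᵀ * (A⁻¹ * (S + (lW / (K : ℝ)) • 1) * A⁻¹ * Y) =
          (A⁻¹ * Y)ᵀ * (S * (A⁻¹ * Y)) + (lW / (K : ℝ)) • ((A⁻¹ * Y)ᵀ * (A⁻¹ * Y)) := by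
        rw [Matrix.transpose_mul, hAs]
        simp only [Matrix.mul_add, Matrix.add_mul, Matrix.mul_assoc, Matrix.smul_mul,
          Matrix.mul_smul, Matrix.one_mul]
      rw [e, Matrix.trace_add, Matrix.trace_smul, ← frobSq_eq, smul_eq_mul]
      have := trace_quad_nonneg hW (A⁻¹ * Y)
      have := mul_pos hc (frobSq_pos hne)
      linarith
    · generalize S + (lW / (K : ℝ)) • (1 : Matrix (Fin d) (Fin d) ℝ) = B
      have h1 : (H - H * Qmat K n) * Rmat K n = 0 := by
        rw [Matrix.sub_mul, Matrix.mul_assoc, Q_mul_R hn, sub_self]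
      rw [Matrix.smul_mul, Matrix.add_mul, Matrix.sub_mul, Matrix.mul_assoc A⁻¹ (H - _), h1,
        Matrix.mul_zero, zero_sub, Matrix.mul_assoc (A⁻¹ * B * A⁻¹) H, Matrix.smul_mul, smul_add,
        smul_smul, neg_mul, hcoef2, neg_smul lH, sub_eq_add_neg _ (lH • _), smul_neg, neg_smul,
        neg_neg]

lemma nc1_deriv_neg (hK : 0 < K) (hn : 0 < n) (lW lH : ℝ) (hlW : 0 < lW)
    (Ht : ℝ → Matrix (Fin d) (Fin K × Fin n) ℝ) (t : ℝ)
    (hflow : ∀ (a : Fin d) (p : Fin K × Fin n),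
      HasDerivAt (fun s => Ht s a p) (-((K : ℝ) * n) * gradL lW lH (Ht t) a p) t)
    (hw : 0 < (SigmaW (Ht t)).trace) (hb : 0 < (SigmaB (Ht t)).trace) :
    ∃ D : ℝ, D < 0 ∧ HasDerivAt (fun s => NC1til (Ht s)) D t := by
  have hK' : (0 : ℝ) < K := by exact_mod_cast hK
  have hn' : (0 : ℝ) < n := by exact_mod_cast hn
  obtain ⟨⟨M, hM, hMe⟩, P, hP, hPe⟩ := flow_algebra hK hn lW lH hlW (Ht t)
  have hf : ∀ a p, HasDerivAt (fun s => Ht s a p)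
    (((-((K : ℝ) * n)) • gradL lW lH (Ht t)) a p) t := hflow
  have dw := (hasDerivAt_frobSq Ht _ (1 - Qmat K n) t hf).const_mul (1 / ((K : ℝ) * n))
  have db := (hasDerivAt_frobSq Ht _ (Rmat K n) t hf).const_mul (1 / (K : ℝ))
  simp only [← trace_SigmaW] at dw
  simp only [← trace_SigmaB] at db
  refine ⟨_, ?_, dw.fun_div db hb.ne'⟩
  have hRne : Ht t * Rmat K n ≠ 0 := by
    intro h0
    rw [trace_SigmaB, h0] at hb
    simp [frobSq] at hb
  have hu := trace_quad_nonneg hM (Ht t * (1 - Qmat K n))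
  have hv := hP _ hRne
  rw [hMe, hPe]
  simp only [Matrix.mul_sub (_ᵀ), Matrix.mul_smul, Matrix.trace_sub, Matrix.trace_smul,
    smul_eq_mul, ← frobSq_eq]
  rw [trace_SigmaW] at hw ⊢
  rw [trace_SigmaB] at hb ⊢
  generalize ((Ht t * (1 - Qmat K n))ᵀ * (M * (Ht t * (1 - Qmat K n)))).trace = u at *
  generalize ((Ht t * Rmat K n)ᵀ * (P * (Ht t * Rmat K n))).trace = v at *
  generalize frobSq (Ht t * (1 - Qmat K n)) = w at *
  generalize frobSq (Ht t * Rmat K n) = b at *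
  apply div_neg_of_neg_of_pos _ (by positivity)
  have key : 0 < (2 / (K : ℝ)) * ((1 / ((K : ℝ) * n) * u) * (1 / (K : ℝ) * b) +
      (1 / ((K : ℝ) * n) * w) * (1 / (K : ℝ) * v)) := by
    have : 0 ≤ (1 / ((K : ℝ) * n) * u) := by positivity
    have : 0 < (1 / (K : ℝ) * v) := by positivity
    have := mul_pos hw this
    positivity
  have e : ∀ x : ℝ, 0 < x → ∀ y, y = -x → y < 0 := by intros; linarith
  refine e _ key _ ?_
  ring

/-- along gradient flow on the central path, at any time where
`tr Σ_W(H_t) > 0` and `tr Σ_B(H_t) > 0`, the NC1 metric `ÑC₁(H_t) = tr Σ_W / tr Σ_B` is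
differentiable with strictly negative derivative; hence it strictly decreases along the flow
as long as it has not reached zero. -/
theorem nc1_strictly_decreases_along_flow
    (K n d : ℕ) (hK : 0 < K) (hn : 0 < n) (hdK : K ≤ d)
    (lW lH : ℝ) (hlW : 0 < lW) (hlH : 0 ≤ lH)
    (Ht : ℝ → Matrix (Fin d) (Fin K × Fin n) ℝ)
    (hflow : ∀ t : ℝ, 0 ≤ t → ∀ (a : Fin d) (p : Fin K × Fin n),
      HasDerivAt (fun s => Ht s a p) (-((K : ℝ) * n) * gradL lW lH (Ht t) a p) t) :
    (∀ t : ℝ, 0 ≤ t → 0 < (SigmaW (Ht t)).trace → 0 < (SigmaB (Ht t)).trace →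
      ∃ D : ℝ, D < 0 ∧ HasDerivAt (fun s => NC1til (Ht s)) D t) ∧
    (∀ s t : ℝ, 0 ≤ s → s < t →
      (∀ u ∈ Set.Icc s t,
        0 < (SigmaW (Ht u)).trace ∧ 0 < (SigmaB (Ht u)).trace) →
      NC1til (Ht t) < NC1til (Ht s)) := by
  have main : ∀ t : ℝ, 0 ≤ t → 0 < (SigmaW (Ht t)).trace → 0 < (SigmaB (Ht t)).trace →
      ∃ D : ℝ, D < 0 ∧ HasDerivAt (fun s => NC1til (Ht s)) D t := fun t ht hw hb =>
    nc1_deriv_neg hK hn lW lH hlW Ht t (hflow t ht) hw hb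
  refine ⟨main, ?_⟩
  intro s t hs hst hpos
  have hm : ∀ u ∈ Set.Icc s t, ∃ D : ℝ, D < 0 ∧ HasDerivAt (fun s => NC1til (Ht s)) D u :=
    fun u hu => main u (hs.trans hu.1) (hpos u hu).1 (hpos u hu).2
  have hanti : StrictAntiOn (fun s => NC1til (Ht s)) (Set.Icc s t) := by
    refine strictAntiOn_of_deriv_neg (convex_Icc s t) ?_ ?_
    · intro u hu
      obtain ⟨D, _, hD⟩ := hm u hu
      exact hD.continuousAt.continuousWithinAt
    · intro u hu
      obtain ⟨D, hneg, hD⟩ := hm u (interior_subset hu)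
      rw [hD.deriv]
      exact hneg
  exact hanti (Set.left_mem_Icc.2 hst.le) (Set.right_mem_Icc.2 hst.le) hst

end
end

section
/- Let λ_W > 0, λ_H ≥ 0, fix H₀ ∈ ℝ^{d×Kn}, and set M := (1/(Kn))(3/λ_W + λ_H). For every β > KnM = 3/λ_W + λ_H, any global minimizer H_{1/β} of the map H ↦ L(H) + (β/(2Kn))‖H − H₀‖_F² satisfies ‖H_{1/β} − H₀‖_F ≤ ( β/(KnM) − 1 )^{-1} ‖H₀‖_F. In particular H_{1/β} → H₀ as β → ∞ (for any choice of global minimizers). -/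
open Matrix Filter
open scoped BigOperators

noncomputable section

variable {K n d : ℕ}

section Helpers

lemma le_of_sq_le_sq_aux {a b : ℝ} (h : a ^ 2 ≤ b ^ 2) (hb : 0 ≤ b) : a ≤ b :=
  (le_abs_self a).trans (abs_le_of_sq_le_sq h hb)

variable {m p q : Type*} [Fintype m] [Fintype p] [Fintype q]

/-- Frobenius inner product. -/
def fip (A B : Matrix m p ℝ) : ℝ := ∑ i, ∑ j, A i j * B i j

lemma fip_self (A : Matrix m p ℝ) : fip A A = frobSq A := by
  simp [fip, frobSq, sq]

lemma fip_trace (A B : Matrix m p ℝ) : fip A B = Matrix.trace (A * Bᵀ) := by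
  simp [fip, Matrix.trace, Matrix.mul_apply]

lemma frobSq_nonneg' (A : Matrix m p ℝ) : 0 ≤ frobSq A := by
  unfold frobSq; positivity

lemma frobSq_transpose' (A : Matrix m p ℝ) : frobSq Aᵀ = frobSq A := by
  unfold frobSq; rw [Finset.sum_comm]; rfl

lemma fip_comm (A B : Matrix m p ℝ) : fip A B = fip B A := by
  simp [fip, mul_comm]

lemma fip_add_left (A B C : Matrix m p ℝ) : fip (A + B) C = fip A C + fip B C := by
  simp [fip, add_mul, Finset.sum_add_distrib]

lemma fip_sub_left (A B C : Matrix m p ℝ) : fip (A - B) C = fip A C - fip B C := by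
  simp [fip, sub_mul, Finset.sum_sub_distrib]

lemma fip_smul_left (c : ℝ) (A C : Matrix m p ℝ) : fip (c • A) C = c * fip A C := by
  simp [fip, Finset.mul_sum, mul_assoc]

lemma fip_mul_left (A : Matrix m q ℝ) (B : Matrix q p ℝ) (C : Matrix m p ℝ) :
    fip (A * B) C = fip B (Aᵀ * C) := by
  rw [fip_trace, fip_trace, Matrix.transpose_mul, Matrix.transpose_transpose,
    Matrix.mul_assoc, Matrix.trace_mul_comm, Matrix.mul_assoc]

lemma fip_mul_right (A : Matrix m q ℝ) (B : Matrix q p ℝ) (C : Matrix m p ℝ) :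
    fip (A * B) C = fip A (C * Bᵀ) := by
  rw [fip_trace, fip_trace, Matrix.transpose_mul, Matrix.transpose_transpose,
    Matrix.mul_assoc]

lemma frobSq_add' (A B : Matrix m p ℝ) :
    frobSq (A + B) = frobSq A + 2 * fip A B + frobSq B := by
  rw [← fip_self, ← fip_self, ← fip_self, fip_add_left, fip_comm A (A + B),
    fip_comm B (A + B), fip_add_left, fip_add_left, fip_comm B A]; ring

lemma frobSq_smul' (c : ℝ) (A : Matrix m p ℝ) : frobSq (c • A) = c ^ 2 * frobSq A := by
  rw [← fip_self, ← fip_self, fip_smul_left, fip_comm, fip_smul_left]; ring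

lemma frobNorm_sq (A : Matrix m p ℝ) : frobNorm A ^ 2 = frobSq A :=
  Real.sq_sqrt (frobSq_nonneg' A)

lemma frobNorm_nonneg' (A : Matrix m p ℝ) : 0 ≤ frobNorm A := Real.sqrt_nonneg _

lemma fip_le (A B : Matrix m p ℝ) : fip A B ≤ frobNorm A * frobNorm B := by
  have h : fip A B ^ 2 ≤ frobSq A * frobSq B := by
    unfold fip frobSq
    simp only [← Fintype.sum_prod_type']
    exact Finset.sum_mul_sq_le_sq_mul_sq _ _ _
  refine le_of_sq_le_sq_aux ?_ (mul_nonneg (frobNorm_nonneg' A) (frobNorm_nonneg' B))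
  rw [mul_pow, frobNorm_sq, frobNorm_sq]; exact h

lemma frobNorm_add_le' (A B : Matrix m p ℝ) :
    frobNorm (A + B) ≤ frobNorm A + frobNorm B := by
  refine le_of_sq_le_sq_aux ?_ (add_nonneg (frobNorm_nonneg' A) (frobNorm_nonneg' B))
  have := fip_le A B
  rw [frobNorm_sq, frobSq_add', ← frobNorm_sq A, ← frobNorm_sq B]
  nlinarith

end Helpers

lemma Wstar_normal (hn : 0 < n) (lW : ℝ) (hlW : 0 < lW)
    (H : Matrix (Fin d) (Fin K × Fin n) ℝ) :
    (Ymat K n - Wstar lW H * H) * Hᵀ = ((n : ℝ) * lW) • Wstar lW H := by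
  have hc : 0 < (n : ℝ) * lW := by positivity
  have hpd : (H * Hᵀ + ((n : ℝ) * lW) • (1 : Matrix (Fin d) (Fin d) ℝ)).PosDef := by
    apply Matrix.PosDef.posSemidef_add
    · simpa using Matrix.posSemidef_self_mul_conjTranspose H
    · exact Matrix.PosDef.one.smul hc
  have hu := (Matrix.isUnit_iff_isUnit_det _).1 hpd.isUnit
  have key : Wstar lW H * (H * Hᵀ + ((n : ℝ) * lW) • (1 : Matrix (Fin d) (Fin d) ℝ))
      = Ymat K n * Hᵀ := by
    unfold Wstar
    rw [Matrix.mul_assoc, Matrix.nonsing_inv_mul _ hu, Matrix.mul_one]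
  rw [Matrix.sub_mul, ← key, Matrix.mul_add, Matrix.mul_smul, Matrix.mul_one,
    Matrix.mul_assoc]
  abel

lemma frobSq_mul_Ymat {m : Type*} [Fintype m] (V : Matrix m (Fin K) ℝ) :
    frobSq (V * Ymat K n) = n * frobSq V := by
  unfold frobSq
  simp [Matrix.mul_apply, Ymat, Fintype.sum_prod_type, Finset.mul_sum]

lemma Wstar_min (hn : 0 < n) (lW : ℝ) (hlW : 0 < lW)
    (H : Matrix (Fin d) (Fin K × Fin n) ℝ) (W : Matrix (Fin K) (Fin d) ℝ) :
    frobSq (Wstar lW H * H - Ymat K n) + n * lW * frobSq (Wstar lW H)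
      ≤ frobSq (W * H - Ymat K n) + n * lW * frobSq W := by
  have hN := Wstar_normal hn lW hlW H
  set V := Wstar lW H
  obtain ⟨D, rfl⟩ : ∃ D, W = V + D := ⟨W - V, by abel⟩
  have e : (V + D) * H - Ymat K n = (V * H - Ymat K n) + D * H := by
    rw [Matrix.add_mul]; abel
  have h1 : fip (V * H - Ymat K n) (D * H) = - (n * lW * fip V D) := by
    rw [fip_comm, fip_mul_right, ← neg_sub (Ymat K n), Matrix.neg_mul, hN, ← neg_smul,
      fip_comm, fip_smul_left]; ring
  rw [e, frobSq_add', frobSq_add' V D, h1]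
  have := frobSq_nonneg' (D * H)
  have : 0 ≤ n * lW * frobSq D := mul_nonneg (by positivity) (frobSq_nonneg' D)
  nlinarith

lemma grad_bound (hn : 0 < n) (lW : ℝ) (hlW : 0 < lW)
    (H : Matrix (Fin d) (Fin K × Fin n) ℝ) :
    frobNorm ((Wstar lW H)ᵀ * (Ymat K n - Wstar lW H * H)) ≤ 1 / lW * frobNorm H := by
  have hN := Wstar_normal hn lW hlW H
  set W := Wstar lW H
  have hn' : (0 : ℝ) < n := by exact_mod_cast hn
  obtain ⟨R, hR⟩ : ∃ R, R = Ymat K n - W * H := ⟨_, rfl⟩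
  rw [← hR] at hN ⊢
  have h1 : n * lW * frobSq W = fip (Wᵀ * R) H := by
    rw [← fip_self, ← fip_smul_left, ← hN, fip_comm, fip_mul_left, Matrix.transpose_transpose,
      fip_comm, fip_mul_right, Matrix.transpose_transpose, fip_comm]
  have h2 : frobSq (Wᵀ * R) ≤ n * frobSq W := by
    have hY : Wᵀ * Ymat K n = Wᵀ * R + Wᵀ * (W * H) := by
      rw [← Matrix.mul_add, hR]; congr 1; abel
    have h3 : fip (Wᵀ * R) (Wᵀ * (W * H)) = n * lW * frobSq (Wᵀ * W) := by
      rw [← Matrix.mul_assoc, fip_comm, fip_mul_right, Matrix.mul_assoc, hN, fip_comm,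
        Matrix.mul_smul, fip_smul_left, fip_self]
    rw [← frobSq_transpose' W, ← frobSq_mul_Ymat, hY, frobSq_add', h3]
    have := frobSq_nonneg' (Wᵀ * (W * H))
    have : 0 ≤ n * lW * frobSq (Wᵀ * W) := mul_nonneg (by positivity) (frobSq_nonneg' _)
    linarith
  have h4 := fip_le (Wᵀ * R) H
  rw [← frobNorm_sq] at h2
  have hG := frobNorm_nonneg' (Wᵀ * R)
  have hH := frobNorm_nonneg' H
  set G := frobNorm (Wᵀ * R)
  have h5 : lW * G ^ 2 ≤ G * frobNorm H := by nlinarith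
  rw [one_div, inv_mul_eq_div, le_div_iff₀ hlW]
  rcases hG.eq_or_lt with h | h
  · rw [← h]; simpa using hH
  · nlinarith

lemma linear_coeff_zero (a C : ℝ) (h : ∀ t : ℝ, 0 ≤ t * a + t ^ 2 * C) : a = 0 := by
  by_contra ha
  have hC : 0 < |C| + 1 := by positivity
  have h1 := h (-a / (|C| + 1))
  have h2 : -a / (|C| + 1) * a + (-a / (|C| + 1)) ^ 2 * C
      = a ^ 2 * (C - (|C| + 1)) / (|C| + 1) ^ 2 := by field_simp; ring
  rw [h2] at h1
  have h3 : a ^ 2 * (C - (|C| + 1)) / (|C| + 1) ^ 2 < 0 := by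
    apply div_neg_of_neg_of_pos _ (by positivity)
    have := le_abs_self C
    have : 0 < a ^ 2 := by positivity
    nlinarith
  linarith

lemma prox_bound (hK : 0 < K) (hn : 0 < n)
    (lW lH : ℝ) (hlW : 0 < lW) (hlH : 0 ≤ lH)
    (H₀ : Matrix (Fin d) (Fin K × Fin n) ℝ)
    (β : ℝ) (hβ : 3 / lW + lH < β)
    (Hm : Matrix (Fin d) (Fin K × Fin n) ℝ)
    (hmin : ∀ H' : Matrix (Fin d) (Fin K × Fin n) ℝ,
      Lcp lW lH Hm + (β / (2 * (K : ℝ) * n)) * frobSq (Hm - H₀)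
        ≤ Lcp lW lH H' + (β / (2 * (K : ℝ) * n)) * frobSq (H' - H₀)) :
    frobNorm (Hm - H₀) ≤ (β / (3 / lW + lH) - 1)⁻¹ * frobNorm H₀ := by
  have hn' : (0 : ℝ) < n := by exact_mod_cast hn
  have hK' : (0 : ℝ) < K := by exact_mod_cast hK
  have hgb := grad_bound hn lW hlW Hm
  obtain ⟨W, hW⟩ : ∃ W, W = Wstar lW Hm := ⟨_, rfl⟩
  obtain ⟨D, hD⟩ : ∃ D, D = Hm - H₀ := ⟨_, rfl⟩
  have hLe : ∀ H : Matrix (Fin d) (Fin K × Fin n) ℝ,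
      2 * (K : ℝ) * n * (Lcp lW lH H + (β / (2 * (K : ℝ) * n)) * frobSq (H - H₀)) =
      (frobSq (Wstar lW H * H - Ymat K n) + n * lW * frobSq (Wstar lW H))
       + lH * frobSq H + β * frobSq (H - H₀) := by
    intro H; unfold Lcp; field_simp
  have hq : ∀ H' : Matrix (Fin d) (Fin K × Fin n) ℝ,
      frobSq (W * Hm - Ymat K n) + lH * frobSq Hm + β * frobSq D
      ≤ frobSq (W * H' - Ymat K n) + lH * frobSq H' + β * frobSq (H' - H₀) := by
    intro H'
    have h1 := mul_le_mul_of_nonneg_left (hmin H') (by positivity : 0 ≤ 2 * (K : ℝ) * n)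
    rw [hLe, hLe, ← hW, ← hD] at h1
    have h2 := Wstar_min hn lW hlW H' W
    linarith
  have hz := linear_coeff_zero
    (2 * fip (W * Hm - Ymat K n) (W * D) + lH * (2 * fip Hm D) + β * (2 * frobSq D))
    (frobSq (W * D) + lH * frobSq D + β * frobSq D) (by
      intro t
      have h := hq (Hm + t • D)
      have e1 : W * (Hm + t • D) - Ymat K n = (W * Hm - Ymat K n) + t • (W * D) := by
        rw [Matrix.mul_add, Matrix.mul_smul]; abel
      have e2 : Hm + t • D - H₀ = D + t • D := by rw [hD]; abel
      rw [e1, e2, frobSq_add', frobSq_add', frobSq_add', frobSq_smul', frobSq_smul',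
        fip_comm _ (t • (W * D)), fip_comm _ (t • D), fip_comm D (t • D),
        fip_smul_left, fip_smul_left, fip_smul_left, fip_self, fip_comm _ Hm,
        fip_comm (W * D)] at h
      linarith)
  rw [← hW] at hgb
  have h3 : fip (W * Hm - Ymat K n) (W * D) = - fip (Wᵀ * (Ymat K n - W * Hm)) D := by
    rw [fip_comm, fip_mul_left, fip_comm, ← neg_sub (Ymat K n), Matrix.mul_neg,
      ← neg_one_smul ℝ, fip_smul_left]; ring
  rw [h3] at hz
  have h4 := fip_le (Wᵀ * (Ymat K n - W * Hm)) D
  have h5 := fip_le ((-1 : ℝ) • Hm) D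
  have h6 : frobNorm ((-1 : ℝ) • Hm) = frobNorm Hm := by
    unfold frobNorm; rw [frobSq_smul']; norm_num
  rw [fip_smul_left, h6] at h5
  have h7 : frobNorm Hm ≤ frobNorm D + frobNorm H₀ := by
    have := frobNorm_add_le' D H₀
    rwa [hD, sub_add_cancel, ← hD] at this
  rw [← hD]
  rw [← frobNorm_sq] at hz
  have n1 := frobNorm_nonneg' D
  have n2 := frobNorm_nonneg' Hm
  have n3 := frobNorm_nonneg' H₀
  set δ := frobNorm D
  set η := frobNorm Hm
  set η₀ := frobNorm H₀
  have hl : 0 < 1 / lW := by positivity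
  have hM3 : 3 / lW = 3 * (1 / lW) := by ring
  have hMpos : 0 < 3 / lW + lH := by positivity
  set M := 3 / lW + lH with hM
  have h8 : β * δ ^ 2 ≤ M * η * δ := by
    have a1 := mul_le_mul_of_nonneg_right hgb n1
    have a2 := mul_le_mul_of_nonneg_left h5 hlH
    have a3 : 0 ≤ 1 / lW * (η * δ) := by positivity
    rw [hM, hM3]
    nlinarith
  have h9 : β * δ ≤ M * η := by
    rcases n1.eq_or_lt with h | h
    · rw [← h]; simp; positivity
    · by_contra hcon
      push Not at hcon
      nlinarith
  have h10 : (β - M) * δ ≤ M * η₀ := by nlinarith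
  have h11 : (β / M - 1)⁻¹ = M / (β - M) := by
    rw [div_sub_one hMpos.ne', inv_div]
  rw [h11, div_mul_eq_mul_div, le_div_iff₀ (by linarith)]
  linarith

/-- with `M = (1/(Kn))(3/λ_W + λ_H)`, for `β > KnM` any global minimizer
`H_{1/β}` of `H ↦ L(H) + (β/(2Kn))‖H − H₀‖_F²` satisfies
`‖H_{1/β} − H₀‖_F ≤ (β/(KnM) − 1)⁻¹ ‖H₀‖_F`; in particular, for any family of global
minimizers, `H_{1/β} → H₀` as `β → ∞`. -/
theorem proximal_minimizer_close_to_input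
    (K n d : ℕ) (hK : 0 < K) (hn : 0 < n) (hdK : K ≤ d)
    (lW lH : ℝ) (hlW : 0 < lW) (hlH : 0 ≤ lH)
    (H₀ : Matrix (Fin d) (Fin K × Fin n) ℝ)
    (β : ℝ) (hβ : (K : ℝ) * n * ((1 / ((K : ℝ) * n)) * (3 / lW + lH)) < β)
    (Hm : Matrix (Fin d) (Fin K × Fin n) ℝ)
    (hmin : ∀ H' : Matrix (Fin d) (Fin K × Fin n) ℝ,
      Lcp lW lH Hm + (β / (2 * (K : ℝ) * n)) * frobSq (Hm - H₀)
        ≤ Lcp lW lH H' + (β / (2 * (K : ℝ) * n)) * frobSq (H' - H₀))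
    (Hfam : ℝ → Matrix (Fin d) (Fin K × Fin n) ℝ)
    (hfam : ∀ β' : ℝ, (K : ℝ) * n * ((1 / ((K : ℝ) * n)) * (3 / lW + lH)) < β' →
      ∀ H' : Matrix (Fin d) (Fin K × Fin n) ℝ,
        Lcp lW lH (Hfam β') + (β' / (2 * (K : ℝ) * n)) * frobSq (Hfam β' - H₀)
          ≤ Lcp lW lH H' + (β' / (2 * (K : ℝ) * n)) * frobSq (H' - H₀)) :
    frobNorm (Hm - H₀)
      ≤ (β / ((K : ℝ) * n * ((1 / ((K : ℝ) * n)) * (3 / lW + lH))) - 1)⁻¹ * frobNorm H₀ ∧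
    Filter.Tendsto (fun β' => frobNorm (Hfam β' - H₀)) Filter.atTop (nhds 0) := by
  have hn' : (0 : ℝ) < n := by exact_mod_cast hn
  have hK' : (0 : ℝ) < K := by exact_mod_cast hK
  have hMM : (K : ℝ) * n * ((1 / ((K : ℝ) * n)) * (3 / lW + lH)) = 3 / lW + lH := by
    field_simp
  rw [hMM] at hβ hfam ⊢
  refine ⟨prox_bound hK hn lW lH hlW hlH H₀ β hβ Hm hmin, ?_⟩
  have hMpos : 0 < 3 / lW + lH := by positivity
  have hlim : Filter.Tendsto (fun b : ℝ => (b / (3 / lW + lH) - 1)⁻¹ * frobNorm H₀)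
      Filter.atTop (nhds 0) := by
    have h1 : Filter.Tendsto (fun b : ℝ => b / (3 / lW + lH) - 1) Filter.atTop
        Filter.atTop :=
      Filter.tendsto_atTop_add_const_right _ (-1) (Filter.tendsto_id.atTop_div_const hMpos)
    simpa using h1.inv_tendsto_atTop.mul_const (frobNorm H₀)
  refine tendsto_of_tendsto_of_tendsto_of_le_of_le' tendsto_const_nhds hlim
    (Filter.Eventually.of_forall fun b => frobNorm_nonneg' _) ?_
  filter_upwards [Filter.eventually_gt_atTop (3 / lW + lH)] with b hb
  exact prox_bound hK hn lW lH hlW hlH H₀ b hb (Hfam b) (hfam b hb)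


end
end
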